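/- arXiv:2501.14368 — 5 statements merged into one kernel-verified Lean document; each statement's English description precedes it below -/
import Mathlib

section
/- For every real μ > 0 one has (μ·cosh(μ) − sinh(μ))/sinh(μ)² ≤ 1/3. -/
/-!
Clearing the denominator, the claim is `0 ≤ f μ` for `f x = sinh² x + 3 sinh x - 3 x cosh x`.
Since `f 0 = 0` and `f' x = sinh x * (2 cosh x - 3 x)`, it suffices that `3 x ≤ 2 cosh x`, which
makes `f` monotone on `[0, ∞)`. That bound is fairly tight near `x = 1.2`, but the truncation
`1 + x²/2 + x⁴/24` of the power series of `cosh` is already large enough.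
-/

lemma quartic_le_cosh (x : ℝ) : 1 + x ^ 2 / 2 + x ^ 4 / 24 ≤ Real.cosh x := by
  have h := sum_le_hasSum (Finset.range 3)
    (fun n _ => div_nonneg (by rw [pow_mul]; positivity) (by positivity)) (Real.hasSum_cosh x)
  norm_num [Finset.sum_range_succ, Nat.factorial] at h
  exact h

lemma three_mul_le_two_mul_cosh (x : ℝ) : 3 * x ≤ 2 * Real.cosh x := by
  -- `x⁴ ≥ 3 x² - 9/4` reduces the quartic bound to a positive quadratic with minimum at `x = 6/5`.
  nlinarith [quartic_le_cosh x, sq_nonneg (x ^ 2 - 3 / 2), sq_nonneg (x - 6 / 5)]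

/-- Hyperbolic inequality `(μ cosh μ − sinh μ)/sinh²μ ≤ 1/3` for `μ > 0`. -/
theorem stmt_7 (μ : ℝ) (hμ : 0 < μ) :
    (μ * Real.cosh μ - Real.sinh μ) / Real.sinh μ ^ 2 ≤ 1 / 3 := by
  have hd (x : ℝ) : HasDerivAt
      (fun x : ℝ => Real.sinh x ^ 2 + 3 * Real.sinh x - 3 * (x * Real.cosh x))
      (Real.sinh x * (2 * Real.cosh x - 3 * x)) x := by
    have hs := Real.hasDerivAt_sinh x
    refine (((hs.pow 2).add (hs.const_mul 3)).sub
      (((hasDerivAt_id x).mul (Real.hasDerivAt_cosh x)).const_mul 3)).congr_deriv ?_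
    simp only [id]
    ring
  have hmono : MonotoneOn
      (fun x : ℝ => Real.sinh x ^ 2 + 3 * Real.sinh x - 3 * (x * Real.cosh x)) (Set.Ici 0) := by
    refine monotoneOn_of_hasDerivWithinAt_nonneg (convex_Ici 0)
      (fun x _ => (hd x).continuousAt.continuousWithinAt)
      (fun x _ => (hd x).hasDerivWithinAt) fun x hx => ?_
    rw [interior_Ici, Set.mem_Ioi] at hx
    exact mul_nonneg (Real.sinh_nonneg_iff.2 hx.le)
      (sub_nonneg.2 (three_mul_le_two_mul_cosh x))
  have h0 := hmono Set.self_mem_Ici hμ.le hμ.le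
  have hs : 0 < Real.sinh μ := Real.sinh_pos_iff.2 hμ
  simp only [Real.sinh_zero] at h0
  rw [div_le_iff₀ (by positivity)]
  linarith
end

section
/- For every real μ > 0 one has (sinh(2μ) + 2μ)/(4·sinh(μ)²) ≤ 1 + 1/μ. -/
/-- Hyperbolic inequality `(sinh(2μ) + 2μ)/(4 sinh²μ) ≤ 1 + 1/μ` for `μ > 0`. -/
theorem stmt_8 (μ : ℝ) (hμ : 0 < μ) :
    (Real.sinh (2 * μ) + 2 * μ) / (4 * Real.sinh μ ^ 2) ≤ 1 + 1 / μ := by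
  have hs : μ ≤ Real.sinh μ := Real.self_le_sinh_iff.2 hμ.le
  have hs0 : 0 < Real.sinh μ := hμ.trans_le hs
  -- `cosh μ - sinh μ = exp (-μ) ≤ 1`
  have hc : Real.cosh μ ≤ Real.sinh μ + 1 := by
    have h1 := Real.cosh_sub_sinh μ
    have h2 : Real.exp (-μ) ≤ 1 := Real.exp_le_one_iff.2 (by linarith)
    linarith
  have h1 : μ * Real.cosh μ ≤ μ * Real.sinh μ + Real.sinh μ := by
    nlinarith [mul_le_mul_of_nonneg_left hc hμ.le]
  have h2 : μ ^ 2 ≤ Real.sinh μ ^ 2 := by gcongr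
  have h3 := mul_le_mul_of_nonneg_left h1 hs0.le
  have h4 : 0 ≤ μ * Real.sinh μ ^ 2 := by positivity
  have e : 1 + 1 / μ = (μ + 1) / μ := by field_simp
  rw [Real.sinh_two_mul, e, div_le_div_iff₀ (by positivity) hμ]
  nlinarith [h2, h3, h4]
end

section
/- For every real μ > 0 one has (μ·cosh(μ) + sinh(μ))/sinh(μ)² ≤ 2/μ. -/
/-!
Clearing denominators, the claim is `f μ ≥ 0` for `f x = 2 sinh² x - x² cosh x - x sinh x`.
Both `f` and `f'` vanish at `0`, so it suffices that `f'' ≥ 0` on `[0, ∞)`. Writing `c = cosh x`,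
`s = sinh x`, one has `f'' = 8c² - 4 - 4c - 5xs - x²c`, and the bounds `x s ≤ s² = c² - 1` and
`x² ≤ 2(c - 1)` give `f'' ≥ (c - 1)²`.
-/

lemma nonneg_of_hasDerivAt_nonneg {g g' : ℝ → ℝ} (hg : ∀ x, HasDerivAt g (g' x) x)
    (h0 : g 0 = 0) (hg' : ∀ x, 0 ≤ x → 0 ≤ g' x) (x : ℝ) (hx : 0 ≤ x) : 0 ≤ g x := by
  have hmono : MonotoneOn g (Set.Ici 0) := by
    apply monotoneOn_of_deriv_nonneg (convex_Ici 0)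
    · exact fun y _ => (hg y).continuousAt.continuousWithinAt
    · exact fun y _ => (hg y).differentiableAt.differentiableWithinAt
    · intro y hy
      rw [interior_Ici] at hy
      rw [(hg y).deriv]
      exact hg' y (le_of_lt hy)
  simpa [h0] using hmono (Set.mem_Ici.2 le_rfl) (Set.mem_Ici.2 hx) hx

lemma sq_le_two_mul_cosh_sub_one {x : ℝ} (hx : 0 ≤ x) : x ^ 2 ≤ 2 * (Real.cosh x - 1) := by
  have h1 : x / 2 ≤ Real.sinh (x / 2) := Real.self_le_sinh_iff.2 (by linarith)
  have h2 : Real.cosh x = Real.cosh (x / 2) ^ 2 + Real.sinh (x / 2) ^ 2 := by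
    rw [← Real.cosh_two_mul]
    congr 1
    ring
  have h3 := Real.cosh_sq (x / 2)
  nlinarith

/-- The second derivative of `2 sinh² x - x² cosh x - x sinh x` is nonnegative for `x ≥ 0`. -/
lemma second_deriv_nonneg (x : ℝ) (hx : 0 ≤ x) :
    0 ≤ 4 * (Real.cosh x ^ 2 + Real.sinh x ^ 2) - 4 * Real.cosh x - 5 * x * Real.sinh x
      - x ^ 2 * Real.cosh x := by
  have hs : x ≤ Real.sinh x := Real.self_le_sinh_iff.2 hx
  have hxs : x * Real.sinh x ≤ Real.sinh x ^ 2 := by nlinarith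
  have hxc : x ^ 2 * Real.cosh x ≤ 2 * (Real.cosh x - 1) * Real.cosh x :=
    mul_le_mul_of_nonneg_right (sq_le_two_mul_cosh_sub_one hx) (Real.cosh_pos x).le
  have hcs := Real.cosh_sq x
  nlinarith [sq_nonneg (Real.cosh x - 1)]

lemma first_deriv_nonneg (x : ℝ) (hx : 0 ≤ x) :
    0 ≤ 4 * (Real.sinh x * Real.cosh x) - 3 * (x * Real.cosh x) - x ^ 2 * Real.sinh x
      - Real.sinh x := by
  refine nonneg_of_hasDerivAt_nonneg (g := fun x => 4 * (Real.sinh x * Real.cosh x)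
    - 3 * (x * Real.cosh x) - x ^ 2 * Real.sinh x - Real.sinh x) (fun y => ?_) (by simp)
    second_deriv_nonneg x hx
  have hs := Real.hasDerivAt_sinh y
  have hc := Real.hasDerivAt_cosh y
  have hi := hasDerivAt_id' y
  convert! ((((hs.mul hc).const_mul 4).sub ((hi.mul hc).const_mul 3)).sub
    ((hi.pow 2).mul hs)).sub hs using 1
  simp only [Pi.pow_apply]
  push_cast
  ring

lemma two_sinh_sq_sub_nonneg (x : ℝ) (hx : 0 ≤ x) :
    0 ≤ 2 * Real.sinh x ^ 2 - x ^ 2 * Real.cosh x - x * Real.sinh x := by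
  refine nonneg_of_hasDerivAt_nonneg (g := fun x => 2 * Real.sinh x ^ 2 - x ^ 2 * Real.cosh x
    - x * Real.sinh x) (fun y => ?_) (by simp) first_deriv_nonneg x hx
  have hs := Real.hasDerivAt_sinh y
  have hc := Real.hasDerivAt_cosh y
  have hi := hasDerivAt_id' y
  convert! (((hs.pow 2).const_mul 2).sub ((hi.pow 2).mul hc)).sub (hi.mul hs) using 1
  simp only [Pi.pow_apply]
  push_cast
  ring

/-- Hyperbolic inequality `(μ cosh μ + sinh μ)/sinh²μ ≤ 2/μ` for `μ > 0`. -/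
theorem stmt_9 (μ : ℝ) (hμ : 0 < μ) :
    (μ * Real.cosh μ + Real.sinh μ) / Real.sinh μ ^ 2 ≤ 2 / μ := by
  have hs : 0 < Real.sinh μ := Real.sinh_pos_iff.2 hμ
  rw [div_le_div_iff₀ (by positivity) hμ]
  linarith [two_sinh_sq_sub_nonneg μ hμ.le]
end

section
/- For every real ν ≥ 0 the function t ↦ cosh(ν·t)/cosh((ν+1)·t) is nonincreasing (antitone) on [0, ∞). -/
/-- For `ν ≥ 0`, the function `t ↦ cosh(νt)/cosh((ν+1)t)` is nonincreasing on `[0, ∞)`. -/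
theorem stmt_15 (ν : ℝ) (hν : 0 ≤ ν) :
    AntitoneOn (fun t : ℝ => Real.cosh (ν * t) / Real.cosh ((ν + 1) * t))
      (Set.Ici (0:ℝ)) := by
  intro s hs t ht hst
  have hs0 : 0 ≤ s := hs
  have ht0 : 0 ≤ t := ht
  have hνst : ν * s ≤ ν * t := mul_le_mul_of_nonneg_left hst hν
  have hνs : 0 ≤ ν * s := mul_nonneg hν hs0
  have hνt : 0 ≤ ν * t := mul_nonneg hν ht0
  change Real.cosh (ν * t) / Real.cosh ((ν + 1) * t) ≤
    Real.cosh (ν * s) / Real.cosh ((ν + 1) * s)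
  rw [div_le_div_iff₀ (Real.cosh_pos _) (Real.cosh_pos _)]
  -- By `2 cosh a cosh b = cosh (a + b) + cosh (a - b)`, it suffices to compare the sum and
  -- difference terms separately, since `cosh` is monotone in the absolute value.
  have hadd : Real.cosh (ν * t + (ν + 1) * s) ≤ Real.cosh (ν * s + (ν + 1) * t) := by
    rw [Real.cosh_le_cosh, abs_of_nonneg (by linarith), abs_of_nonneg (by linarith)]
    linarith
  have hsub : Real.cosh (ν * t - (ν + 1) * s) ≤ Real.cosh (ν * s - (ν + 1) * t) := by
    rw [Real.cosh_le_cosh, abs_sub_comm (ν * s), abs_of_nonneg (a := (ν + 1) * t - ν * s)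
      (by linarith), abs_le]
    constructor <;> linarith
  rw [Real.cosh_add, Real.cosh_add] at hadd
  rw [Real.cosh_sub, Real.cosh_sub] at hsub
  linarith
end

section
/- Let m ≥ 2 be a natural number, μ ≥ 0 and 0 < r < η real numbers, and let f : ℝ → ℝ be twice continuously differentiable on [r, η] and satisfy the ordinary differential equation (s^(m−1)·f'(s))' = s^(m−1)·(μ/s² + 1)·f(s) for all s ∈ [r, η], together with the boundary conditions f(r) = 1 and f'(η) = 0. Then ∫_r^η ( f'(s)² + (μ/s²)·f(s)² + f(s)² ) · s^(m−1) ds = −r^(m−1)·f'(r). -/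
/-!
By the product rule and the differential equation, the integrand is the derivative of
`s^(m-1) f'(s) f(s)` on `[r, η]`. It is continuous there because `r > 0`, so the fundamental theorem
of calculus gives the integral as a difference of boundary values: the one at `η` vanishes since
`f'(η) = 0`, and the one at `r` is `r^(m-1) f'(r)` since `f(r) = 1`.
-/

/-- Integration-by-parts identity for the radial equation of the shifted Laplacian:
if `(s^(m−1) f')' = s^(m−1)(μ/s² + 1) f` on `[r, η]` with `f(r) = 1`, `f'(η) = 0`, then
`∫_r^η (f'² + (μ/s²) f² + f²) s^(m−1) ds = −r^(m−1) f'(r)`. -/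
theorem stmt_17 (m : ℕ) (hm : 2 ≤ m) (μ r η : ℝ) (hμ : 0 ≤ μ)
    (hr : 0 < r) (hrη : r < η)
    (f f' f'' : ℝ → ℝ)
    (hf' : ∀ s ∈ Set.Icc r η, HasDerivWithinAt f (f' s) (Set.Icc r η) s)
    (hf'' : ∀ s ∈ Set.Icc r η, HasDerivWithinAt f' (f'' s) (Set.Icc r η) s)
    (hcont : ContinuousOn f'' (Set.Icc r η))
    (hode : ∀ s ∈ Set.Icc r η,
      HasDerivWithinAt (fun t => t ^ (m - 1) * f' t)
        (s ^ (m - 1) * (μ / s ^ 2 + 1) * f s) (Set.Icc r η) s)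
    (hfr : f r = 1) (hfη : f' η = 0) :
    (∫ s in r..η, (f' s ^ 2 + (μ / s ^ 2) * f s ^ 2 + f s ^ 2) * s ^ (m - 1))
      = -(r ^ (m - 1) * f' r) := by
  have hcf : ContinuousOn f (Set.Icc r η) := fun s hs => (hf' s hs).continuousWithinAt
  have hcf' : ContinuousOn f' (Set.Icc r η) := fun s hs => (hf'' s hs).continuousWithinAt
  have hderiv : ∀ s ∈ Set.Icc r η, HasDerivWithinAt (fun t => t ^ (m - 1) * f' t * f t)
      ((f' s ^ 2 + (μ / s ^ 2) * f s ^ 2 + f s ^ 2) * s ^ (m - 1)) (Set.Icc r η) s := by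
    intro s hs
    exact ((hode s hs).mul (hf' s hs)).congr_deriv (by ring)
  have hint : ContinuousOn
      (fun s => (f' s ^ 2 + (μ / s ^ 2) * f s ^ 2 + f s ^ 2) * s ^ (m - 1)) (Set.Icc r η) := by
    have hdiv : ContinuousOn (fun s : ℝ => μ / s ^ 2) (Set.Icc r η) :=
      continuousOn_const.div (continuousOn_id.pow 2)
        fun s hs => pow_ne_zero 2 (hr.trans_le hs.1).ne'
    exact (((hcf'.pow 2).add (hdiv.mul (hcf.pow 2))).add (hcf.pow 2)).mul
      (continuousOn_id.pow (m - 1))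
  rw [intervalIntegral.integral_eq_sub_of_hasDerivAt_of_le hrη.le
    (fun s hs => (hderiv s hs).continuousWithinAt)
    (fun s hs => (hderiv s (Set.Ioo_subset_Icc_self hs)).hasDerivAt (Icc_mem_nhds hs.1 hs.2))
    (hint.intervalIntegrable_of_Icc hrη.le)]
  simp [hfr, hfη]
end
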